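/- Suppose ζ is a primitive d-th root of unity and that m is even or char K = 2. Then the K-algebra homomorphism K[X,Y,W]/⟨W^m − ε X Y⟩ → Z_gr(E(Λ_q)) determined by X ↦ x, Y ↦ y, W ↦ w is an isomorphism; in particular Z_gr(E(Λ_q)) is generated as a K-algebra by x, y, w subject only to the relation w^m = ε x y. -/

import Mathlib

open scoped BigOperators

noncomputable section

/-- Generators of the path algebra: trivial paths `e i`, arrows `a i : i → i+1`
and `abar i : i+1 → i`. -/
inductive Gen (m : ℕ) : Type
  | e : ZMod m → Gen m
  | a : ZMod m → Gen m
  | abar : ZMod m → Gen m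

/-- The free associative algebra on the generators. -/
abbrev FA (K : Type) [Field K] (m : ℕ) : Type := FreeAlgebra K (Gen m)

def Ee (K : Type) [Field K] (m : ℕ) (i : ZMod m) : FA K m := FreeAlgebra.ι K (Gen.e i)
def Aa (K : Type) [Field K] (m : ℕ) (i : ZMod m) : FA K m := FreeAlgebra.ι K (Gen.a i)
def Bb (K : Type) [Field K] (m : ℕ) (i : ZMod m) : FA K m := FreeAlgebra.ι K (Gen.abar i)

/-- The defining relations of the path algebra KQ. -/
inductive PathRel (K : Type) [Field K] (m : ℕ) [NeZero m] : FA K m → FA K m → Prop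
  | orth : ∀ i j : ZMod m, i ≠ j → PathRel K m (Ee K m i * Ee K m j) 0
  | idem : ∀ i : ZMod m, PathRel K m (Ee K m i * Ee K m i) (Ee K m i)
  | total : PathRel K m (∑ i : ZMod m, Ee K m i) 1
  | asrc : ∀ i : ZMod m, PathRel K m (Ee K m i * Aa K m i) (Aa K m i)
  | atgt : ∀ i : ZMod m, PathRel K m (Aa K m i * Ee K m (i + 1)) (Aa K m i)
  | bsrc : ∀ i : ZMod m, PathRel K m (Ee K m (i + 1) * Bb K m i) (Bb K m i)
  | btgt : ∀ i : ZMod m, PathRel K m (Bb K m i * Ee K m i) (Bb K m i)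

/-- The path algebra KQ. -/
abbrev PathAlg (K : Type) [Field K] (m : ℕ) [NeZero m] : Type := RingQuot (PathRel K m)

def pe (K : Type) [Field K] (m : ℕ) [NeZero m] (i : ZMod m) : PathAlg K m :=
  RingQuot.mkAlgHom K (PathRel K m) (Ee K m i)
def pa (K : Type) [Field K] (m : ℕ) [NeZero m] (i : ZMod m) : PathAlg K m :=
  RingQuot.mkAlgHom K (PathRel K m) (Aa K m i)
def pb (K : Type) [Field K] (m : ℕ) [NeZero m] (i : ZMod m) : PathAlg K m :=
  RingQuot.mkAlgHom K (PathRel K m) (Bb K m i)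

/-- The relations defining the Koszul dual (Ext algebra) of `Λ_q`:
`q_i⁻¹ a_i ā_i + ā_{i-1} a_{i-1} = 0`. -/
inductive ExtRel (K : Type) [Field K] (m : ℕ) [NeZero m] (q : ZMod m → K) :
    PathAlg K m → PathAlg K m → Prop
  | rel : ∀ i : ZMod m,
      ExtRel K m q ((q i)⁻¹ • (pa K m i * pb K m i) + pb K m (i - 1) * pa K m (i - 1)) 0

/-- The Ext algebra `E(Λ_q)`. -/
abbrev ExtAlg (K : Type) [Field K] (m : ℕ) [NeZero m] (q : ZMod m → K) : Type :=
  RingQuot (ExtRel K m q)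

def xe (K : Type) [Field K] (m : ℕ) [NeZero m] (q : ZMod m → K) (i : ZMod m) :
    ExtAlg K m q := RingQuot.mkAlgHom K (ExtRel K m q) (pe K m i)
def xa (K : Type) [Field K] (m : ℕ) [NeZero m] (q : ZMod m → K) (i : ZMod m) :
    ExtAlg K m q := RingQuot.mkAlgHom K (ExtRel K m q) (pa K m i)
def xb (K : Type) [Field K] (m : ℕ) [NeZero m] (q : ZMod m → K) (i : ZMod m) :
    ExtAlg K m q := RingQuot.mkAlgHom K (ExtRel K m q) (pb K m i)

/-- `γ_i^n`, the image of the path `a_i a_{i+1} ⋯ a_{i+n-1}` in `E(Λ_q)`. -/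
def gam (K : Type) [Field K] (m : ℕ) [NeZero m] (q : ZMod m → K) (i : ZMod m) :
    ℕ → ExtAlg K m q
  | 0 => xe K m q i
  | n + 1 => xa K m q i * gam K m q (i + 1) n

/-- `δ_i^n`, the image of the path `ā_{i+n-1} ⋯ ā_{i+1} ā_i` in `E(Λ_q)`. -/
def del (K : Type) [Field K] (m : ℕ) [NeZero m] (q : ZMod m → K) (i : ZMod m) :
    ℕ → ExtAlg K m q
  | 0 => xe K m q i
  | n + 1 => xb K m q (i + (n : ZMod m)) * del K m q i n

/-- Homogeneity of path-length degree `n` in `E(Λ_q)`: membership in the span of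
the (images of) paths of length `n`, i.e. of the monomials `γ_i^s δ_j^t` with `s + t = n`. -/
def Homog (K : Type) [Field K] (m : ℕ) [NeZero m] (q : ZMod m → K) (n : ℕ)
    (z : ExtAlg K m q) : Prop :=
  z ∈ Submodule.span K
    {x : ExtAlg K m q | ∃ (i j : ZMod m) (s t : ℕ), s + t = n ∧ x = gam K m q i s * del K m q j t}

/-- The graded centre of `E(Λ_q)`: the subalgebra generated by all homogeneous elements `z`
of degree `n` such that `z g = (-1)^{n n'} g z` for all homogeneous `g` of degree `n'`. -/
def ZGr (K : Type) [Field K] (m : ℕ) [NeZero m] (q : ZMod m → K) :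
    Subalgebra K (ExtAlg K m q) :=
  Algebra.adjoin K
    {z : ExtAlg K m q | ∃ n : ℕ, Homog K m q n z ∧
      ∀ (n' : ℕ) (g : ExtAlg K m q), Homog K m q n' g →
        z * g = ((-1 : K) ^ (n * n')) • (g * z)}

/-- The product `q_k q_{k+1} ⋯ q_{k+len-1}` (subscripts modulo `m`). -/
def qblock (K : Type) [Field K] (m : ℕ) [NeZero m] (q : ZMod m → K) (k len : ℕ) : K :=
  ∏ j ∈ Finset.range len, q ((k + j : ℕ) : ZMod m)

/-- The coefficient `∏_{k=1}^{i} (q_k ⋯ q_{k+len-1})⁻¹`. -/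
def wcoef (K : Type) [Field K] (m : ℕ) [NeZero m] (q : ZMod m → K) (i len : ℕ) : K :=
  ∏ k ∈ Finset.Icc 1 i, (qblock K m q k len)⁻¹

/-!
The relation `ā_{i-1} a_{i-1} = -q_i⁻¹ a_i ā_i` moves all arrows `a` to the left of all arrows `ā`,
so `E(Λ_q)` is spanned by the paths `γ_i^s δ_j^t`; letting the generators act on the free module on
these symbols shows that they form a basis. Commuting with the vertices and arrows forces the
coordinates of a central element to vanish unless `s ≡ t` modulo `m`, and to satisfy a first-order
recurrence around the cycle, once with the twist of `t` and once with the twist of `s`. A central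
element is therefore determined by its coordinates at the vertex `0`. As `ζ` is a primitive `d`-th
root of unity, going once around the cycle gives `d ∣ t`, and comparing the two recurrences gives
`s ≡ t` modulo `d m`. Each such pair `(s, t)` is the shape of exactly one monomial `x^i y^j w^k`
with `k < m`, and these are also the normal forms of `K[X, Y, W]` modulo `W^m - ε X Y`. Finally
`(-1)^m = 1`, so the signs in the definition of the graded centre are trivial on elements that
commute with the vertices, and the graded centre is the centre.
-/

section ReducedMonomials

open MvPolynomial

/-- The monomials `x^i y^j w^k` with `k < n`, indexed by `(i, j, k)`: the normal forms modulo a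
relation that expresses `w^n` through `x * y`. -/
def reducedMonomial {A : Type*} [Monoid A] {n : ℕ} (x y w : A) (p : ℕ × ℕ × Fin n) : A :=
  x ^ p.1 * y ^ p.2.1 * w ^ (p.2.2 : ℕ)

lemma map_reducedMonomial {A B F : Type*} [Monoid A] [Monoid B] [FunLike F A B]
    [MonoidHomClass F A B] {n : ℕ} (f : F) (x y w : A) (p : ℕ × ℕ × Fin n) :
    f (reducedMonomial x y w p) = reducedMonomial (f x) (f y) (f w) p := by
  simp only [reducedMonomial, map_mul, map_pow]

variable {R A : Type*} {n : ℕ} [NeZero n]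

lemma monomial_mem_span_reducedMonomial [CommSemiring R] [CommSemiring A] [Algebra R A]
    {x y w : A} {ε : R} (hw : w ^ n = ε • (x * y)) (i j k : ℕ) :
    x ^ i * y ^ j * w ^ k ∈
      Submodule.span R (Set.range (reducedMonomial x y w : ℕ × ℕ × Fin n → A)) := by
  have hreduce : x ^ i * y ^ j * w ^ k = ε ^ (k / n) •
      reducedMonomial x y w (i + k / n, j + k / n, Fin.ofNat n k) := by
    conv_lhs => rw [← Nat.div_add_mod k n, pow_add, pow_mul, hw, smul_pow]
    simp only [reducedMonomial, Fin.ofNat, smul_mul_assoc, mul_smul_comm]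
    ring_nf
  rw [hreduce]
  exact Submodule.smul_mem _ _ (Submodule.subset_span ⟨_, rfl⟩)

lemma aeval_mem_span_reducedMonomial [CommSemiring R] [CommSemiring A] [Algebra R A]
    {x y w : A} {ε : R} (hw : w ^ n = ε • (x * y)) (p : MvPolynomial (Fin 3) R) :
    aeval ![x, y, w] p ∈
      Submodule.span R (Set.range (reducedMonomial x y w : ℕ × ℕ × Fin n → A)) := by
  rw [aeval_def, eval₂_eq']
  refine Submodule.sum_mem _ fun e _ => ?_
  rw [← Algebra.smul_def]
  simpa [Fin.prod_univ_three] using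
    Submodule.smul_mem _ _ (monomial_mem_span_reducedMonomial hw (e 0) (e 1) (e 2))

lemma span_reducedMonomial_eq_top [CommSemiring R] [CommSemiring A] [Algebra R A]
    {x y w : A} {ε : R} (hw : w ^ n = ε • (x * y))
    (hgen : Function.Surjective (aeval (R := R) ![x, y, w])) :
    Submodule.span R (Set.range (reducedMonomial x y w : ℕ × ℕ × Fin n → A)) = ⊤ := by
  refine eq_top_iff.mpr fun z _ => ?_
  obtain ⟨p, rfl⟩ := hgen z
  exact aeval_mem_span_reducedMonomial hw p

variable (n) in
lemma span_reducedMonomial_mk_X [CommRing R] (ε : R) :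
    let mk := Ideal.Quotient.mkₐ R
      (Ideal.span {(X 2 : MvPolynomial (Fin 3) R) ^ n - C ε * (X 0 * X 1)})
    Submodule.span R (Set.range (reducedMonomial (mk (X 0)) (mk (X 1)) (mk (X 2)) :
      ℕ × ℕ × Fin n → _)) = ⊤ := by
  intro mk
  have hrel : mk (X 2) ^ n = ε • (mk (X 0) * mk (X 1)) := by
    rw [← map_pow, ← map_mul, ← map_smul, smul_eq_C_mul]
    exact Ideal.Quotient.mk_eq_mk_iff_sub_mem _ _ |>.mpr (Ideal.mem_span_singleton_self _)
  have haeval : aeval ![mk (X 0), mk (X 1), mk (X 2)] = mk :=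
    algHom_ext fun i => by fin_cases i <;> simp
  refine span_reducedMonomial_eq_top hrel ?_
  rw [haeval]
  exact Ideal.Quotient.mkₐ_surjective R _

theorem exists_algEquiv_of_reducedMonomial [CommRing R] [CommSemiring A] [Algebra R A]
    {x y w : A} {ε : R} (hw : w ^ n = ε • (x * y))
    (hli : LinearIndependent R (reducedMonomial x y w : ℕ × ℕ × Fin n → A))
    (hspan : Submodule.span R (Set.range (reducedMonomial x y w : ℕ × ℕ × Fin n → A)) = ⊤) :
    ∃ f : (MvPolynomial (Fin 3) R ⧸
        Ideal.span {(X 2 : MvPolynomial (Fin 3) R) ^ n - C ε * (X 0 * X 1)}) ≃ₐ[R] A,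
      f (Ideal.Quotient.mk _ (X 0)) = x ∧ f (Ideal.Quotient.mk _ (X 1)) = y ∧
        f (Ideal.Quotient.mk _ (X 2)) = w := by
  let _ : CommRing A := { Algebra.semiringToRing R with mul_comm := mul_comm }
  set I := Ideal.span {(X 2 : MvPolynomial (Fin 3) R) ^ n - C ε * (X 0 * X 1)}
  have hI : I ≤ RingHom.ker (aeval (R := R) ![x, y, w]) := by
    rw [Ideal.span_singleton_le_iff_mem, RingHom.mem_ker]
    simp [hw, Algebra.smul_def]
  let φ := Ideal.Quotient.liftₐ I (aeval ![x, y, w]) hI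
  have hφ (p : MvPolynomial (Fin 3) R) : φ (Ideal.Quotient.mk I p) = aeval ![x, y, w] p := rfl
  have hbasis : φ.toLinearMap ∘ reducedMonomial (Ideal.Quotient.mkₐ R I (X 0))
      (Ideal.Quotient.mkₐ R I (X 1)) (Ideal.Quotient.mkₐ R I (X 2)) =
        (reducedMonomial x y w : ℕ × ℕ × Fin n → A) := by
    ext p
    simp [map_reducedMonomial, hφ]
  have hbij : Function.Bijective φ := LinearMap.bijective_of_linearIndependent_of_span_eq_top
    (f := φ.toLinearMap) (span_reducedMonomial_mk_X n ε) (hbasis ▸ hli) (hbasis ▸ hspan)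
  exact ⟨AlgEquiv.ofBijective φ hbij, by simp [hφ], by simp [hφ], by simp [hφ]⟩

end ReducedMonomials

namespace ExtAlg

variable {K : Type} [Field K] {m : ℕ}

section Twists

variable (q : ZMod m → K)

/-- The scalar by which `ā_{i+t-1} ⋯ ā_i · a_i` differs from `a_{i+t} · ā_{i+t} ⋯ ā_{i+1}`. -/
def arrowTwist (i : ZMod m) (t : ℕ) : K := ∏ r ∈ Finset.range t, -(q (i + r + 1))⁻¹

/-- The scalar by which `δ_i^t γ_i^s` differs from `γ_{i+t}^s δ_{i+s}^t`. -/
def pathTwist (i : ZMod m) (t s : ℕ) : K := ∏ k ∈ Finset.range s, arrowTwist q (i + k) t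

@[simp]
lemma arrowTwist_zero (i : ZMod m) : arrowTwist q i 0 = 1 := Finset.prod_range_zero _

lemma arrowTwist_succ (i : ZMod m) (t : ℕ) :
    arrowTwist q i (t + 1) = arrowTwist q i t * -(q (i + t + 1))⁻¹ :=
  Finset.prod_range_succ _ _

lemma arrowTwist_add (i : ZMod m) (t s : ℕ) :
    arrowTwist q i (t + s) = arrowTwist q i t * arrowTwist q (i + t) s := by
  simp only [arrowTwist, Finset.prod_range_add, Nat.cast_add, add_assoc]

lemma arrowTwist_succ' (i : ZMod m) (t : ℕ) :
    arrowTwist q i (t + 1) = -(q (i + 1))⁻¹ * arrowTwist q (i + 1) t := by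
  rw [add_comm t, arrowTwist_add, Nat.cast_one]
  simp [arrowTwist_succ]

lemma arrowTwist_ne_zero {q : ZMod m → K} (hq : ∀ i, q i ≠ 0) (i : ZMod m) (t : ℕ) :
    arrowTwist q i t ≠ 0 :=
  Finset.prod_ne_zero_iff.mpr fun _ _ => neg_ne_zero.mpr (inv_ne_zero (hq _))

lemma pathTwist_ne_zero {q : ZMod m → K} (hq : ∀ i, q i ≠ 0) (i : ZMod m) (t s : ℕ) :
    pathTwist q i t s ≠ 0 :=
  Finset.prod_ne_zero_iff.mpr fun _ _ => arrowTwist_ne_zero hq _ _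

lemma pathTwist_comm (i : ZMod m) (t s : ℕ) : pathTwist q i t s = pathTwist q i s t := by
  simp only [pathTwist, arrowTwist]
  rw [Finset.prod_comm]
  simp only [add_right_comm]

@[simp]
lemma pathTwist_zero_right (i : ZMod m) (t : ℕ) : pathTwist q i t 0 = 1 :=
  Finset.prod_range_zero _

@[simp]
lemma pathTwist_zero_left (i : ZMod m) (s : ℕ) : pathTwist q i 0 s = 1 := by
  rw [pathTwist_comm, pathTwist_zero_right]

@[simp]
lemma pathTwist_one_right (i : ZMod m) (t : ℕ) : pathTwist q i t 1 = arrowTwist q i t := by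
  simp [pathTwist]

@[simp]
lemma pathTwist_one_left (i : ZMod m) (s : ℕ) : pathTwist q i 1 s = arrowTwist q i s := by
  rw [pathTwist_comm, pathTwist_one_right]

lemma pathTwist_add_right (i : ZMod m) (t s s' : ℕ) :
    pathTwist q i t (s + s') = pathTwist q i t s * pathTwist q (i + s) t s' := by
  simp only [pathTwist, Finset.prod_range_add, Nat.cast_add, add_assoc]

variable {q} in
lemma natCast_eq_pathTwist_mul {c : ZMod m → K} {t : ℕ}
    (hc : ∀ i, c (i + 1) = arrowTwist q i t * c i) (n : ℕ) :
    c n = pathTwist q 0 t n * c 0 := by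
  induction n with
  | zero => simp
  | succ n ih =>
    rw [Nat.cast_succ, hc, ih, pathTwist_add_right, pathTwist_one_right, zero_add]
    ring

end Twists

variable [NeZero m]

section Relations

variable (q : ZMod m → K)

/-- The projection of the free algebra on the vertices and arrows onto `E(Λ_q)`. -/
def ofFree : FA K m →ₐ[K] ExtAlg K m q :=
  (RingQuot.mkAlgHom K (ExtRel K m q)).comp (RingQuot.mkAlgHom K (PathRel K m))

lemma ofFree_Ee (i : ZMod m) : ofFree q (Ee K m i) = xe K m q i := rfl

lemma ofFree_Aa (i : ZMod m) : ofFree q (Aa K m i) = xa K m q i := rfl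

lemma ofFree_Bb (i : ZMod m) : ofFree q (Bb K m i) = xb K m q i := rfl

lemma ofFree_surjective : Function.Surjective (ofFree q) :=
  (RingQuot.mkAlgHom_surjective K _).comp (RingQuot.mkAlgHom_surjective K _)

variable {q} in
lemma ofFree_eq_of_pathRel {u v : FA K m} (h : PathRel K m u v) : ofFree q u = ofFree q v :=
  congrArg (RingQuot.mkAlgHom K (ExtRel K m q)) (RingQuot.mkAlgHom_rel K h)

lemma xe_mul_self (i : ZMod m) : xe K m q i * xe K m q i = xe K m q i := by
  simpa only [map_mul, ofFree_Ee] using ofFree_eq_of_pathRel (q := q) (.idem i)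

lemma xe_mul_xe_of_ne {i j : ZMod m} (h : i ≠ j) : xe K m q i * xe K m q j = 0 := by
  simpa only [map_mul, map_zero, ofFree_Ee] using ofFree_eq_of_pathRel (q := q) (.orth i j h)

lemma sum_xe : ∑ i : ZMod m, xe K m q i = 1 := by
  simpa only [map_sum, map_one, ofFree_Ee] using ofFree_eq_of_pathRel (q := q) .total

lemma xe_mul_xa (i : ZMod m) : xe K m q i * xa K m q i = xa K m q i := by
  simpa only [map_mul, ofFree_Ee, ofFree_Aa] using ofFree_eq_of_pathRel (q := q) (.asrc i)

lemma xa_mul_xe (i : ZMod m) : xa K m q i * xe K m q (i + 1) = xa K m q i := by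
  simpa only [map_mul, ofFree_Ee, ofFree_Aa] using ofFree_eq_of_pathRel (q := q) (.atgt i)

lemma xe_mul_xb (i : ZMod m) : xe K m q (i + 1) * xb K m q i = xb K m q i := by
  simpa only [map_mul, ofFree_Ee, ofFree_Bb] using ofFree_eq_of_pathRel (q := q) (.bsrc i)

lemma xb_mul_xe (i : ZMod m) : xb K m q i * xe K m q i = xb K m q i := by
  simpa only [map_mul, ofFree_Ee, ofFree_Bb] using ofFree_eq_of_pathRel (q := q) (.btgt i)

lemma xb_mul_xa (i : ZMod m) : xb K m q i * xa K m q i =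
    (-(q (i + 1))⁻¹) • (xa K m q (i + 1) * xb K m q (i + 1)) := by
  have h := RingQuot.mkAlgHom_rel K (ExtRel.rel (q := q) (i + 1))
  simp only [map_add, map_smul, map_mul, map_zero, add_sub_cancel_right] at h
  exact (eq_neg_of_add_eq_zero_right h).trans (neg_smul _ _).symm

variable {q} in
lemma subalgebra_eq_top {S : Subalgebra K (ExtAlg K m q)} (he : ∀ i, xe K m q i ∈ S)
    (ha : ∀ i, xa K m q i ∈ S) (hb : ∀ i, xb K m q i ∈ S) : S = ⊤ := by
  have hcomap : S.comap (ofFree q) = ⊤ := by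
    rw [eq_top_iff, ← FreeAlgebra.adjoin_range_ι, Algebra.adjoin_le_iff]
    rintro _ ⟨i | i | i, rfl⟩
    exacts [he i, ha i, hb i]
  rw [eq_top_iff]
  intro z _
  obtain ⟨u, rfl⟩ := ofFree_surjective q z
  exact (hcomap ▸ Algebra.mem_top : u ∈ S.comap (ofFree q))

end Relations

section Paths

variable (q : ZMod m → K)

lemma xe_mul_gam (i : ZMod m) (n : ℕ) : xe K m q i * gam K m q i n = gam K m q i n := by
  cases n with
  | zero => exact xe_mul_self q i
  | succ n => rw [gam, ← mul_assoc, xe_mul_xa]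

lemma gam_mul_gam (i : ZMod m) (s t : ℕ) :
    gam K m q i s * gam K m q (i + s) t = gam K m q i (s + t) := by
  induction s generalizing i with
  | zero => simpa [gam] using xe_mul_gam q i t
  | succ s ih =>
    have hvertex : i + ((s + 1 : ℕ) : ZMod m) = i + 1 + s := by push_cast; ring
    rw [gam, mul_assoc, hvertex, ih, Nat.succ_add, gam]

lemma gam_mul_xe (i : ZMod m) (n : ℕ) : gam K m q i n * xe K m q (i + n) = gam K m q i n :=
  gam_mul_gam q i n 0

lemma gam_one (i : ZMod m) : gam K m q i 1 = xa K m q i := by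
  simp [gam, xa_mul_xe]

lemma xe_mul_del (i : ZMod m) (n : ℕ) : xe K m q (i + n) * del K m q i n = del K m q i n := by
  cases n with
  | zero => simpa [del] using xe_mul_self q i
  | succ n => rw [del, ← mul_assoc, Nat.cast_succ, ← add_assoc, xe_mul_xb]

lemma del_mul_del (i : ZMod m) (s t : ℕ) :
    del K m q (i + t) s * del K m q i t = del K m q i (s + t) := by
  induction s with
  | zero => simpa [del] using xe_mul_del q i t
  | succ s ih =>
    have hvertex : i + t + (s : ZMod m) = i + ((s + t : ℕ) : ZMod m) := by push_cast; ring
    rw [del, mul_assoc, ih, Nat.succ_add, del, hvertex]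

lemma del_mul_xe (i : ZMod m) (n : ℕ) : del K m q i n * xe K m q i = del K m q i n := by
  simpa [del] using del_mul_del q i n 0

lemma del_one (i : ZMod m) : del K m q i 1 = xb K m q i := by
  simp [del, xb_mul_xe]

lemma gam_mul_del_of_ne {i j : ZMod m} {s t : ℕ} (h : i + s ≠ j + t) :
    gam K m q i s * del K m q j t = 0 := by
  rw [← gam_mul_xe, ← xe_mul_del q j, mul_assoc, ← mul_assoc (xe K m q _),
    xe_mul_xe_of_ne q h, zero_mul, mul_zero]

lemma del_mul_gam_of_ne {i j : ZMod m} (t s : ℕ) (h : i ≠ j) :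
    del K m q i t * gam K m q j s = 0 := by
  rw [← del_mul_xe, ← xe_mul_gam, mul_assoc, ← mul_assoc (xe K m q _), xe_mul_xe_of_ne q h,
    zero_mul, mul_zero]

lemma del_mul_xa (i : ZMod m) (t : ℕ) : del K m q i t * xa K m q i =
    arrowTwist q i t • (xa K m q (i + t) * del K m q (i + 1) t) := by
  induction t with
  | zero => simp [del, xe_mul_xa, xa_mul_xe]
  | succ t ih =>
    have hvertex : i + ((t + 1 : ℕ) : ZMod m) = i + t + 1 := by push_cast; ring
    rw [del, mul_assoc, ih, mul_smul_comm, ← mul_assoc, xb_mul_xa, smul_mul_assoc, smul_smul,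
      ← arrowTwist_succ, hvertex, mul_assoc, del, add_right_comm i 1]

lemma del_mul_gam (i : ZMod m) (t s : ℕ) : del K m q i t * gam K m q i s =
    pathTwist q i t s • (gam K m q (i + t) s * del K m q (i + s) t) := by
  induction s generalizing i with
  | zero => simp [gam, del_mul_xe, xe_mul_del]
  | succ s ih =>
    have hvertex : i + ((s + 1 : ℕ) : ZMod m) = i + 1 + s := by push_cast; ring
    rw [gam, ← mul_assoc, del_mul_xa, smul_mul_assoc, mul_assoc, ih, mul_smul_comm, smul_smul,
      add_comm s 1, pathTwist_add_right, pathTwist_one_right, Nat.cast_one, add_comm 1 s, hvertex,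
      gam, mul_assoc, add_right_comm i 1]

end Paths

section Basis

variable (q : ZMod m → K)

/-- The normally ordered path `γ_i^s δ_{i+s-t}^t`, with `s` arrows followed by `t` reversed arrows
starting at the vertex `i`; it is indexed by `(i, s, t)`. -/
def pathMonomial (p : ZMod m × ℕ × ℕ) : ExtAlg K m q :=
  gam K m q p.1 p.2.1 * del K m q (p.1 + p.2.1 - p.2.2) p.2.2

lemma gam_mul_del (i : ZMod m) {j : ZMod m} {s t : ℕ} (h : i + s = j + t) :
    gam K m q i s * del K m q j t = pathMonomial q (i, s, t) := by
  simp [pathMonomial, h]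

lemma pathMonomial_zero_right (i : ZMod m) (s : ℕ) :
    pathMonomial q (i, s, 0) = gam K m q i s := by
  simp [pathMonomial, del, gam_mul_xe]

lemma pathMonomial_zero_left (i : ZMod m) (t : ℕ) :
    pathMonomial q (i, 0, t) = del K m q (i - t) t := by
  simpa [pathMonomial, gam] using xe_mul_del q (i - t) t

lemma xe_eq_pathMonomial (i : ZMod m) : xe K m q i = pathMonomial q (i, 0, 0) :=
  (pathMonomial_zero_right q i 0).symm

lemma xa_eq_pathMonomial (i : ZMod m) : xa K m q i = pathMonomial q (i, 1, 0) :=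
  (gam_one q i).symm.trans (pathMonomial_zero_right q i 1).symm

lemma xb_eq_pathMonomial (i : ZMod m) : xb K m q i = pathMonomial q (i + 1, 0, 1) := by
  simp [pathMonomial_zero_left, del_one]

lemma pathMonomial_mul_pathMonomial (i j : ZMod m) (s t s' t' : ℕ) :
    pathMonomial q (i, s, t) * pathMonomial q (j, s', t') =
      if i + s - t = j then pathTwist q j t s' • pathMonomial q (i, s + s', t + t') else 0 := by
  split_ifs with h
  · subst h
    have hdel : del K m q (i + s - t) t * gam K m q (i + s - t) s' =
        pathTwist q (i + s - t) t s' •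
          (gam K m q (i + s) s' * del K m q (i + s - t + s') t) := by
      simpa using del_mul_gam q (i + s - t) t s'
    have hdel' : del K m q (i + s - t + s') t * del K m q (i + s - t + s' - t') t' =
        del K m q (i + s - t + s' - t') (t + t') := by
      simpa using del_mul_del q (i + s - t + s' - t') t t'
    rw [pathMonomial, pathMonomial, mul_assoc, ← mul_assoc (del K m q _ _), hdel, smul_mul_assoc,
      mul_smul_comm, mul_assoc, hdel', ← mul_assoc, gam_mul_gam, gam_mul_del]
    push_cast
    ring
  · rw [pathMonomial, pathMonomial, mul_assoc, ← mul_assoc (del K m q _ _),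
      del_mul_gam_of_ne q _ _ h, zero_mul, mul_zero]

lemma span_range_pathMonomial : Submodule.span K (Set.range (pathMonomial q)) = ⊤ := by
  set P := Submodule.span K (Set.range (pathMonomial q))
  have mem_P (p) : pathMonomial q p ∈ P := Submodule.subset_span ⟨p, rfl⟩
  have one_mem : (1 : ExtAlg K m q) ∈ P := by
    rw [← sum_xe]
    exact sum_mem fun i _ => xe_eq_pathMonomial q i ▸ mem_P _
  have mul_mem (z z' : ExtAlg K m q) (hz : z ∈ P) (hz' : z' ∈ P) : z * z' ∈ P := by
    refine (Submodule.span_mul_span K _ _).trans_le (Submodule.span_le.mpr ?_)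
      (Submodule.mul_mem_mul hz hz')
    rintro _ ⟨_, ⟨⟨i, s, t⟩, rfl⟩, _, ⟨⟨j, s', t'⟩, rfl⟩, rfl⟩
    change pathMonomial q (i, s, t) * pathMonomial q (j, s', t') ∈ P
    rw [pathMonomial_mul_pathMonomial]
    split_ifs
    exacts [P.smul_mem _ (mem_P _), P.zero_mem]
  have htop : P.toSubalgebra one_mem mul_mem = ⊤ := subalgebra_eq_top
    (fun i => xe_eq_pathMonomial q i ▸ mem_P _) (fun i => xa_eq_pathMonomial q i ▸ mem_P _)
    (fun i => xb_eq_pathMonomial q i ▸ mem_P _)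
  exact eq_top_iff.mpr fun z _ => (htop ▸ Algebra.mem_top : z ∈ P.toSubalgebra one_mem mul_mem)

/-- The action of a generator by left multiplication on the space with basis the normally ordered
paths, as dictated by `pathMonomial_mul_pathMonomial`. Its compatibility with the relations is what
makes these paths linearly independent. -/
def genAction : Gen m → Module.End K ((ZMod m × ℕ × ℕ) →₀ K)
  | .e i => Finsupp.linearCombination K fun p => if p.1 = i then .single p 1 else 0
  | .a i => Finsupp.linearCombination K fun p =>
      if p.1 = i + 1 then .single (i, p.2.1 + 1, p.2.2) 1 else 0
  | .abar i => Finsupp.linearCombination K fun p =>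
      if p.1 = i then .single (i + 1, p.2.1, p.2.2 + 1) (arrowTwist q i p.2.1) else 0

lemma lift_genAction_eq_of_pathRel {u v : FA K m} (h : PathRel K m u v) :
    FreeAlgebra.lift K (genAction q) u = FreeAlgebra.lift K (genAction q) v := by
  refine Finsupp.lhom_ext' fun ⟨j, s, t⟩ => LinearMap.ext_ring ?_
  cases h with
  | orth i k hik => by_cases hj : j = k <;> simp [Ee, genAction, hj, hik.symm]
  | idem i => by_cases hj : j = i <;> simp [Ee, genAction, hj]
  | total => simp [Ee, genAction]
  | asrc i => by_cases hj : j = i + 1 <;> simp [Ee, Aa, genAction, hj]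
  | atgt i => by_cases hj : j = i + 1 <;> simp [Ee, Aa, genAction, hj]
  | bsrc i => by_cases hj : j = i <;> simp [Ee, Bb, genAction, hj]
  | btgt i => by_cases hj : j = i <;> simp [Ee, Bb, genAction, hj]

/-- The representation of `KQ` given by `genAction`. -/
def pathAlgAction : PathAlg K m →ₐ[K] Module.End K ((ZMod m × ℕ × ℕ) →₀ K) :=
  RingQuot.liftAlgHom K
    ⟨FreeAlgebra.lift K (genAction q), fun _ _ h => lift_genAction_eq_of_pathRel q h⟩

lemma pathAlgAction_eq_of_extRel {u v : PathAlg K m} (h : ExtRel K m q u v) :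
    pathAlgAction q u = pathAlgAction q v := by
  obtain ⟨i⟩ := h
  refine Finsupp.lhom_ext' fun ⟨j, s, t⟩ => LinearMap.ext_ring ?_
  by_cases hj : j = i <;>
    simp [pathAlgAction, pa, pb, Aa, Bb, genAction, hj, arrowTwist_succ']

/-- The left regular representation of `E(Λ_q)`, written in the coordinates of normally ordered
paths. -/
def leftAction : ExtAlg K m q →ₐ[K] Module.End K ((ZMod m × ℕ × ℕ) →₀ K) :=
  RingQuot.liftAlgHom K ⟨pathAlgAction q, fun _ _ h => pathAlgAction_eq_of_extRel q h⟩

lemma leftAction_xe (i : ZMod m) : leftAction q (xe K m q i) = genAction q (.e i) := by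
  simp [leftAction, xe, pathAlgAction, pe, Ee]

lemma leftAction_xa (i : ZMod m) : leftAction q (xa K m q i) = genAction q (.a i) := by
  simp [leftAction, xa, pathAlgAction, pa, Aa]

lemma leftAction_xb (i : ZMod m) : leftAction q (xb K m q i) = genAction q (.abar i) := by
  simp [leftAction, xb, pathAlgAction, pb, Bb]

lemma leftAction_del_sum_single (i : ZMod m) (t : ℕ) :
    leftAction q (del K m q i t) (∑ j, .single (j, 0, 0) 1) = .single (i + t, 0, t) 1 := by
  induction t with
  | zero => simp [del, leftAction_xe, genAction]
  | succ t ih =>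
    rw [del, map_mul, Module.End.mul_apply, ih]
    simp [leftAction_xb, genAction, add_assoc]

lemma leftAction_gam_single (i : ZMod m) (s r t : ℕ) :
    leftAction q (gam K m q i s) (.single (i + s, r, t) 1) = .single (i, r + s, t) 1 := by
  induction s generalizing i with
  | zero => simp [gam, leftAction_xe, genAction]
  | succ s ih =>
    have hvertex : i + ((s + 1 : ℕ) : ZMod m) = i + 1 + s := by push_cast; ring
    rw [gam, map_mul, Module.End.mul_apply, hvertex, ih]
    simp [leftAction_xa, genAction, add_assoc]

lemma leftAction_pathMonomial_sum_single (p : ZMod m × ℕ × ℕ) :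
    leftAction q (pathMonomial q p) (∑ j, .single (j, 0, 0) 1) = .single p 1 := by
  obtain ⟨i, s, t⟩ := p
  rw [pathMonomial, map_mul, Module.End.mul_apply, leftAction_del_sum_single, sub_add_cancel,
    leftAction_gam_single, zero_add]

lemma linearIndependent_pathMonomial : LinearIndependent K (pathMonomial q) := by
  refine .of_comp
    ((LinearMap.applyₗ (∑ j : ZMod m, Finsupp.single (j, 0, 0) (1 : K))) ∘ₗ
      (leftAction q).toLinearMap) ?_
  convert Finsupp.linearIndependent_single_one K (ZMod m × ℕ × ℕ) using 1
  exact funext (leftAction_pathMonomial_sum_single q)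

/-- The `K`-basis of `E(Λ_q)` consisting of the normally ordered paths `γ_i^s δ_{i+s-t}^t`. -/
def pathBasis : Module.Basis (ZMod m × ℕ × ℕ) K (ExtAlg K m q) :=
  .mk (linearIndependent_pathMonomial q) (span_range_pathMonomial q).ge

@[simp]
lemma pathBasis_apply (p : ZMod m × ℕ × ℕ) : pathBasis q p = pathMonomial q p :=
  Module.Basis.mk_apply _ _ p

@[simp]
lemma pathBasis_repr_pathMonomial (p : ZMod m × ℕ × ℕ) :
    (pathBasis q).repr (pathMonomial q p) = .single p 1 := by
  rw [← pathBasis_apply, Module.Basis.repr_self]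

lemma pathBasis_repr_pathMonomial_mul (i j : ZMod m) (s t s' t' : ℕ) (z : ExtAlg K m q) :
    (pathBasis q).repr (pathMonomial q (j, s', t') * z) (i, s' + s, t' + t) =
      if i = j then pathTwist q (j + s' - t') t' s * (pathBasis q).repr z (j + s' - t', s, t)
      else 0 := by
  induction (pathBasis q).mem_span z using Submodule.span_induction with
  | mem z hz =>
    obtain ⟨⟨k, a, b⟩, rfl⟩ := hz
    rw [pathBasis_apply, pathMonomial_mul_pathMonomial, pathBasis_repr_pathMonomial]
    split_ifs <;> simp_all [Finsupp.single_apply]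
  | zero => simp
  | add z z' _ _ ih ih' => simp [mul_add, ih, ih', ite_add_zero]
  | smul c z _ ih => simp [ih, mul_left_comm]

lemma pathBasis_repr_mul_pathMonomial (i j : ZMod m) (s t s' t' : ℕ) (z : ExtAlg K m q) :
    (pathBasis q).repr (z * pathMonomial q (j, s', t')) (i, s + s', t + t') =
      if i + s - t = j then pathTwist q j t s' * (pathBasis q).repr z (i, s, t) else 0 := by
  induction (pathBasis q).mem_span z using Submodule.span_induction with
  | mem z hz =>
    obtain ⟨⟨k, a, b⟩, rfl⟩ := hz
    rw [pathBasis_apply, pathMonomial_mul_pathMonomial, pathBasis_repr_pathMonomial]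
    by_cases hp : (k, a, b) = (i, s, t)
    · cases hp
      split_ifs <;> simp
    · split_ifs <;> simp_all
  | zero => simp
  | add z z' _ _ ih ih' => simp [add_mul, mul_add, ih, ih', ite_add_zero]
  | smul c z _ ih => simp [ih, mul_left_comm]

end Basis

section CentralElements

variable {q : ZMod m → K}

lemma cast_eq_cast_of_repr_ne_zero {z : ExtAlg K m q} (hz : ∀ i, Commute (xe K m q i) z)
    {i : ZMod m} {s t : ℕ} (h : (pathBasis q).repr z (i, s, t) ≠ 0) : (s : ZMod m) = t := by
  have hleft := pathBasis_repr_pathMonomial_mul q i (i + s - t) s t 0 0 z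
  have hright := pathBasis_repr_mul_pathMonomial q i (i + s - t) s t 0 0 z
  rw [← xe_eq_pathMonomial, (hz _).eq, zero_add, zero_add] at hleft
  rw [← xe_eq_pathMonomial, add_zero, add_zero, hleft] at hright
  by_contra hst
  have hvertex : i ≠ i + s - t := by
    rw [add_sub_assoc, Ne, left_eq_add, sub_eq_zero]
    exact hst
  simp [hvertex, h.symm] at hright

lemma repr_add_one_of_commute_xa {z : ExtAlg K m q} (hz : ∀ i, Commute (xa K m q i) z)
    (i : ZMod m) {s t : ℕ} (hst : (s : ZMod m) = t) :
    (pathBasis q).repr z (i + 1, s, t) = arrowTwist q i t * (pathBasis q).repr z (i, s, t) := by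
  have hleft := pathBasis_repr_pathMonomial_mul q i i s t 1 0 z
  have hright := pathBasis_repr_mul_pathMonomial q i i s t 1 0 z
  rw [← xa_eq_pathMonomial, (hz i).eq, add_comm 1 s, add_comm 0 t] at hleft
  rw [← xa_eq_pathMonomial, hleft] at hright
  simpa [hst] using hright

lemma repr_add_one_of_commute_xb {z : ExtAlg K m q} (hz : ∀ i, Commute (xb K m q i) z)
    (i : ZMod m) {s t : ℕ} (hst : (s : ZMod m) = t) :
    (pathBasis q).repr z (i + 1, s, t) = arrowTwist q i s * (pathBasis q).repr z (i, s, t) := by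
  have hleft := pathBasis_repr_pathMonomial_mul q (i + 1) (i + 1) s t 0 1 z
  have hright := pathBasis_repr_mul_pathMonomial q (i + 1) (i + 1) s t 0 1 z
  rw [← xb_eq_pathMonomial, (hz i).eq, add_comm 0 s, add_comm 1 t] at hleft
  rw [← xb_eq_pathMonomial, hleft] at hright
  simpa [hst] using hright.symm

lemma commute_of_mem_center {z : ExtAlg K m q} (hz : z ∈ Subalgebra.center K (ExtAlg K m q))
    (g : ExtAlg K m q) : Commute g z :=
  Subalgebra.mem_center_iff.mp hz g

lemma repr_natCast_of_mem_center {z : ExtAlg K m q}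
    (hz : z ∈ Subalgebra.center K (ExtAlg K m q)) {s t : ℕ} (hst : (s : ZMod m) = t) (n : ℕ) :
    (pathBasis q).repr z ((n : ZMod m), s, t) =
        pathTwist q 0 t n * (pathBasis q).repr z (0, s, t) ∧
      (pathBasis q).repr z ((n : ZMod m), s, t) =
        pathTwist q 0 s n * (pathBasis q).repr z (0, s, t) :=
  ⟨natCast_eq_pathTwist_mul (c := fun i => (pathBasis q).repr z (i, s, t))
      (repr_add_one_of_commute_xa (fun _ => commute_of_mem_center hz _) · hst) n,
    natCast_eq_pathTwist_mul (c := fun i => (pathBasis q).repr z (i, s, t))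
      (repr_add_one_of_commute_xb (fun _ => commute_of_mem_center hz _) · hst) n⟩

variable (q) in
/-- The coordinates of an element of `E(Λ_q)` along the normally ordered paths that start at the
vertex `0`. -/
def originCoeff : ExtAlg K m q →ₗ[K] (ℕ × ℕ →₀ K) :=
  Finsupp.lcomapDomain (Prod.mk 0) (Prod.mk_right_injective 0) ∘ₗ
    (pathBasis q).repr.toLinearMap

lemma originCoeff_apply (z : ExtAlg K m q) (r : ℕ × ℕ) :
    originCoeff q z r = (pathBasis q).repr z (0, r) := rfl

lemma injOn_originCoeff_center :
    Set.InjOn (originCoeff q) (Subalgebra.center K (ExtAlg K m q)) := by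
  intro z hz z' hz' hzz'
  apply (pathBasis q).repr.injective
  ext ⟨i, s, t⟩
  by_cases hst : (s : ZMod m) = t
  · obtain ⟨n, rfl⟩ := ZMod.natCast_zmod_surjective i
    rw [(repr_natCast_of_mem_center hz hst n).1, (repr_natCast_of_mem_center hz' hst n).1,
      ← originCoeff_apply, hzz', originCoeff_apply]
  · have repr_eq_zero {u} (hu : u ∈ Subalgebra.center K (ExtAlg K m q)) :
        (pathBasis q).repr u (i, s, t) = 0 :=
      not_not.mp (mt (cast_eq_cast_of_repr_ne_zero fun _ => commute_of_mem_center hu _) hst)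
    rw [repr_eq_zero hz, repr_eq_zero hz']

lemma mem_center_of_commute {z : ExtAlg K m q} (he : ∀ i, Commute (xe K m q i) z)
    (ha : ∀ i, Commute (xa K m q i) z) (hb : ∀ i, Commute (xb K m q i) z) :
    z ∈ Subalgebra.center K (ExtAlg K m q) := by
  have mem_centralizer {g} (hg : Commute g z) : g ∈ Subalgebra.centralizer K {z} := by
    simpa [Subalgebra.mem_centralizer_iff] using hg.symm.eq
  have htop : Subalgebra.centralizer K {z} = ⊤ := subalgebra_eq_top
    (fun i => mem_centralizer (he i)) (fun i => mem_centralizer (ha i))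
    (fun i => mem_centralizer (hb i))
  refine Subalgebra.mem_center_iff.mpr fun g => ?_
  have hg : g ∈ Subalgebra.centralizer K {z} := htop ▸ Algebra.mem_top
  exact ((Subalgebra.mem_centralizer_iff K).mp hg z rfl).symm

variable (q) in
/-- The combination `∑_i c_i γ_i^s δ_{i+s-t}^t` of normally ordered paths of a fixed shape, one for
each starting vertex. -/
def vertexSum (c : ZMod m → K) (s t : ℕ) : ExtAlg K m q := ∑ i, c i • pathMonomial q (i, s, t)

lemma originCoeff_vertexSum (c : ZMod m → K) (s t : ℕ) :
    originCoeff q (vertexSum q c s t) = .single (s, t) (c 0) := by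
  ext r
  simp [originCoeff_apply, vertexSum, Finsupp.single_apply, ite_and]

lemma vertexSum_mul_pathMonomial (c : ZMod m → K) {s t : ℕ} (hst : (s : ZMod m) = t)
    (i : ZMod m) (s' t' : ℕ) :
    vertexSum q c s t * pathMonomial q (i, s', t') =
      (c i * pathTwist q i t s') • pathMonomial q (i, s + s', t + t') := by
  simp [vertexSum, Finset.sum_mul, pathMonomial_mul_pathMonomial, hst, smul_smul]

lemma pathMonomial_mul_vertexSum (c : ZMod m → K) (s t : ℕ) (i : ZMod m) (s' t' : ℕ) :
    pathMonomial q (i, s', t') * vertexSum q c s t =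
      (c (i + s' - t') * pathTwist q (i + s' - t') t' s) •
        pathMonomial q (i, s' + s, t' + t) := by
  simp [vertexSum, Finset.mul_sum, pathMonomial_mul_pathMonomial, smul_smul]

lemma vertexSum_mem_center {c : ZMod m → K} {s t : ℕ} (hst : (s : ZMod m) = t)
    (ht : ∀ i, c (i + 1) = arrowTwist q i t * c i) (hs : ∀ i, c (i + 1) = arrowTwist q i s * c i) :
    vertexSum q c s t ∈ Subalgebra.center K (ExtAlg K m q) := by
  refine mem_center_of_commute (fun i => ?_) (fun i => ?_) (fun i => ?_)
  · rw [xe_eq_pathMonomial, Commute, SemiconjBy, pathMonomial_mul_vertexSum,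
      vertexSum_mul_pathMonomial c hst]
    simp
  · rw [xa_eq_pathMonomial, Commute, SemiconjBy, pathMonomial_mul_vertexSum,
      vertexSum_mul_pathMonomial c hst]
    simp [ht, add_comm, mul_comm]
  · rw [xb_eq_pathMonomial, Commute, SemiconjBy, pathMonomial_mul_vertexSum,
      vertexSum_mul_pathMonomial c hst]
    simp [hs, add_comm, mul_comm]

lemma vertexSum_mul (c c' : ZMod m → K) {s t : ℕ} (hst : (s : ZMod m) = t) (s' t' : ℕ) :
    vertexSum q c s t * vertexSum q c' s' t' =
      vertexSum q (fun i => c i * c' i * pathTwist q i t s') (s + s') (t + t') := by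
  rw [vertexSum.eq_def q c', Finset.mul_sum]
  refine Finset.sum_congr rfl fun i _ => ?_
  rw [mul_smul_comm, vertexSum_mul_pathMonomial c hst, smul_smul]
  congr 1
  ring

lemma vertexSum_one_zero_zero : vertexSum q 1 0 0 = 1 := by
  simp [vertexSum, ← xe_eq_pathMonomial, sum_xe]

lemma vertexSum_pow (c : ZMod m → K) {s t : ℕ} (hst : (s : ZMod m) = t) (n : ℕ) :
    vertexSum q c s t ^ n =
      vertexSum q (fun i => c i ^ n * ∏ l ∈ Finset.range n, pathTwist q i t (l * s))
        (n * s) (n * t) := by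
  induction n with
  | zero => simpa [Pi.one_def] using vertexSum_one_zero_zero.symm
  | succ n ih =>
    rw [pow_succ', ih, vertexSum_mul _ _ hst, add_comm s, add_comm t, ← Nat.succ_mul,
      ← Nat.succ_mul]
    congr 1
    ext i
    rw [pow_succ, Finset.prod_range_succ]
    ring

end CentralElements

section RootsOfUnity

variable {q : ZMod m → K} {d : ℕ}

lemma prod_range_add_natCast {M : Type*} [CommMonoid M] (f : ZMod m → M) (i : ZMod m) :
    ∏ r ∈ Finset.range m, f (i + r) = ∏ j, f j := by
  rw [← Equiv.prod_comp (Equiv.addLeft i) f]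
  exact Finset.prod_nbij' (fun r => (r : ZMod m)) ZMod.val (by simp) (by simp [ZMod.val_lt])
    (fun r hr => ZMod.val_cast_of_lt (Finset.mem_range.mp hr)) (by simp) (by simp)

lemma arrowTwist_self (hsign : (-1 : K) ^ m = 1) (i : ZMod m) :
    arrowTwist q i m = (∏ j, q j)⁻¹ := by
  have hprod := prod_range_add_natCast (fun j => (q j)⁻¹) (i + 1)
  simp only [add_right_comm i 1] at hprod
  rw [arrowTwist, Finset.prod_neg, Finset.card_range, hsign, one_mul, hprod,
    Finset.prod_inv_distrib]

lemma arrowTwist_mul_self (hsign : (-1 : K) ^ m = 1) (i : ZMod m) (n : ℕ) :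
    arrowTwist q i (n * m) = (∏ j, q j)⁻¹ ^ n := by
  induction n with
  | zero => simp
  | succ n ih => rw [Nat.succ_mul, arrowTwist_add, ih, arrowTwist_self hsign, pow_succ]

lemma pathTwist_self_right (hsign : (-1 : K) ^ m = 1) (i : ZMod m) (t : ℕ) :
    pathTwist q i t m = (∏ j, q j)⁻¹ ^ t := by
  rw [pathTwist_comm]
  simp [pathTwist, arrowTwist_self hsign]

lemma modEq_of_arrowTwist_eq (hsign : (-1 : K) ^ m = 1) (hζ : IsPrimitiveRoot (∏ i, q i) d)
    (hq : ∀ i, q i ≠ 0) {i : ZMod m} {s t : ℕ} (hst : s ≡ t [MOD m])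
    (h : arrowTwist q i s = arrowTwist q i t) : s ≡ t [MOD d * m] := by
  wlog hle : s ≤ t generalizing s t
  · exact (this hst.symm h.symm (le_of_not_ge hle)).symm
  obtain ⟨n, hn⟩ := (Nat.modEq_iff_dvd' hle).mp hst
  obtain rfl : t = s + n * m := by rw [mul_comm n, ← hn, Nat.add_sub_cancel' hle]
  rw [arrowTwist_add, arrowTwist_mul_self hsign, left_eq_mul₀ (arrowTwist_ne_zero hq _ _)] at h
  obtain ⟨k, rfl⟩ := hζ.inv.dvd_of_pow_eq_one _ h
  exact (Nat.modEq_iff_dvd' hle).mpr ⟨k, by rw [Nat.add_sub_cancel_left]; ring⟩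

lemma dvd_and_modEq_of_originCoeff_ne_zero (hsign : (-1 : K) ^ m = 1)
    (hζ : IsPrimitiveRoot (∏ i, q i) d) (hq : ∀ i, q i ≠ 0) {z : ExtAlg K m q}
    (hz : z ∈ Subalgebra.center K (ExtAlg K m q)) {s t : ℕ}
    (h : originCoeff q z (s, t) ≠ 0) : d ∣ t ∧ s ≡ t [MOD d * m] := by
  rw [originCoeff_apply] at h
  have hst : (s : ZMod m) = t :=
    cast_eq_cast_of_repr_ne_zero (fun _ => commute_of_mem_center hz _) h
  constructor
  · have hcycle := (repr_natCast_of_mem_center hz hst m).1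
    rw [ZMod.natCast_self, right_eq_mul₀ h, pathTwist_self_right hsign] at hcycle
    exact hζ.inv.dvd_of_pow_eq_one _ hcycle
  · obtain ⟨ht, hs⟩ := repr_natCast_of_mem_center hz hst 1
    have htwist := mul_right_cancel₀ h (hs.symm.trans ht)
    rw [pathTwist_one_right, pathTwist_one_right] at htwist
    exact modEq_of_arrowTwist_eq hsign hζ hq ((ZMod.natCast_eq_natCast_iff _ _ _).mp hst) htwist

lemma arrowTwist_mul_of_pow_eq_one (hsign : (-1 : K) ^ m = 1) (hζ : (∏ i, q i) ^ d = 1)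
    (i : ZMod m) (n : ℕ) : arrowTwist q i (n * (d * m)) = 1 := by
  rw [← mul_assoc, mul_comm n, arrowTwist_mul_self hsign, pow_mul, inv_pow, hζ, inv_one, one_pow]

lemma pathTwist_val_natCast (hsign : (-1 : K) ^ m = 1) (hζ : (∏ i, q i) ^ d = 1) (n : ℕ) :
    pathTwist q 0 d (n : ZMod m).val = pathTwist q 0 d n := by
  have hperiodic : Function.Periodic (pathTwist q 0 d) m := fun k => by
    rw [pathTwist_add_right, pathTwist_self_right hsign, inv_pow, hζ, inv_one, mul_one]
  rw [ZMod.val_natCast, hperiodic.map_mod_nat]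

lemma pathTwist_val_add_one (hsign : (-1 : K) ^ m = 1) (hζ : (∏ i, q i) ^ d = 1) (i : ZMod m) :
    pathTwist q 0 d (i + 1).val = arrowTwist q i d * pathTwist q 0 d i.val := by
  obtain ⟨n, rfl⟩ := ZMod.natCast_zmod_surjective i
  rw [← Nat.cast_add_one, pathTwist_val_natCast hsign hζ, pathTwist_val_natCast hsign hζ,
    pathTwist_add_right, pathTwist_one_right, zero_add, mul_comm]

variable (q d) in
/-- The element `x = ∑_i γ_i^{dm}`. -/
def centralX : ExtAlg K m q := vertexSum q 1 (d * m) 0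

variable (q d) in
/-- The element `y = ∑_i δ_i^{dm}`. -/
def centralY : ExtAlg K m q := vertexSum q 1 0 (d * m)

variable (q d) in
/-- The element `w = ∑_i c_i γ_i^d δ_i^d`, whose coefficients solve the recurrence
`c_{i+1} = arrowTwist q i d * c_i`, `c_0 = 1`, imposed by centrality. -/
def centralW : ExtAlg K m q := vertexSum q (fun i => pathTwist q 0 d i.val) d d

lemma centralX_mem_center (hsign : (-1 : K) ^ m = 1) (hζ : (∏ i, q i) ^ d = 1) :
    centralX q d ∈ Subalgebra.center K (ExtAlg K m q) :=
  vertexSum_mem_center (by simp) (by simp)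
    fun i => by simpa using (arrowTwist_mul_of_pow_eq_one hsign hζ i 1).symm

lemma centralY_mem_center (hsign : (-1 : K) ^ m = 1) (hζ : (∏ i, q i) ^ d = 1) :
    centralY q d ∈ Subalgebra.center K (ExtAlg K m q) :=
  vertexSum_mem_center (by simp)
    (fun i => by simpa using (arrowTwist_mul_of_pow_eq_one hsign hζ i 1).symm) (by simp)

lemma centralW_mem_center (hsign : (-1 : K) ^ m = 1) (hζ : (∏ i, q i) ^ d = 1) :
    centralW q d ∈ Subalgebra.center K (ExtAlg K m q) :=
  vertexSum_mem_center rfl (pathTwist_val_add_one hsign hζ) (pathTwist_val_add_one hsign hζ)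

lemma centralX_pow_mul_centralY_pow (i j : ℕ) :
    centralX q d ^ i * centralY q d ^ j = vertexSum q 1 (i * (d * m)) (j * (d * m)) := by
  rw [centralX, centralY, vertexSum_pow _ (by simp), vertexSum_pow _ (by simp),
    vertexSum_mul _ _ (by simp)]
  simp [Pi.one_def]

lemma originCoeff_centralX_pow_mul_centralY_pow_mul_centralW_pow (hsign : (-1 : K) ^ m = 1)
    (hζ : (∏ i, q i) ^ d = 1) (i j k : ℕ) :
    originCoeff q (centralX q d ^ i * centralY q d ^ j * centralW q d ^ k) =
      .single (i * (d * m) + k * d, j * (d * m) + k * d)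
        (∏ l ∈ Finset.range k, pathTwist q 0 d (l * d)) := by
  have htwist : pathTwist q 0 (j * (d * m)) (k * d) = 1 :=
    Finset.prod_eq_one fun _ _ => arrowTwist_mul_of_pow_eq_one hsign hζ _ j
  rw [centralX_pow_mul_centralY_pow, centralW, vertexSum_pow _ rfl, vertexSum_mul _ _ (by simp),
    originCoeff_vertexSum, htwist]
  simp

lemma centralW_pow (hsign : (-1 : K) ^ m = 1) (hζ : (∏ i, q i) ^ d = 1) :
    centralW q d ^ m = (∏ l ∈ Finset.range m, pathTwist q 0 d (l * d)) •
      (centralX q d * centralY q d) := by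
  have hx := centralX_mem_center hsign hζ
  have hy := centralY_mem_center hsign hζ
  have hw := centralW_mem_center hsign hζ
  apply injOn_originCoeff_center (pow_mem hw m) (Subalgebra.smul_mem _ (mul_mem hx hy) _)
  have hW := originCoeff_centralX_pow_mul_centralY_pow_mul_centralW_pow hsign hζ 0 0 m
  have hXY := originCoeff_centralX_pow_mul_centralY_pow_mul_centralW_pow hsign hζ 1 1 0
  simp only [pow_zero, one_mul, pow_one, mul_one, zero_mul, zero_add, add_zero,
    Finset.prod_range_zero] at hW hXY
  rw [hW, map_smul, hXY, Finsupp.smul_single_one, mul_comm m]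

end RootsOfUnity

section Coefficients

variable (q : ZMod m → K) (d : ℕ)

lemma arrowTwist_natCast (n : ℕ) :
    arrowTwist q n d = (-1) ^ d * (qblock K m q (n + 1) d)⁻¹ := by
  rw [arrowTwist, Finset.prod_neg, Finset.card_range, qblock, Finset.prod_inv_distrib]
  simp [add_right_comm]

lemma pathTwist_zero_eq_wcoef (n : ℕ) :
    pathTwist q 0 d n = (-1) ^ (n * d) * wcoef K m q n d := by
  induction n with
  | zero => simp [wcoef]
  | succ n ih =>
    rw [pathTwist_add_right, ih, pathTwist_one_right, zero_add, arrowTwist_natCast, wcoef, wcoef,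
      Finset.prod_Icc_succ_top (Nat.le_add_left 1 n)]
    ring

variable {q d} in
lemma prod_range_neg_one_pow (hsign : (-1 : K) ^ m = 1) :
    ∏ l ∈ Finset.range m, (-1 : K) ^ (l * d * d) = (-1) ^ (m * d / 2) := by
  rw [Finset.prod_pow_eq_pow_sum, ← Finset.sum_mul, ← Finset.sum_mul]
  by_cases hchar : (-1 : K) = 1
  · simp [hchar]
  obtain ⟨k, rfl⟩ := even_iff_two_dvd.mp ((neg_one_pow_eq_one_iff_even hchar).mp hsign)
  have hsum : ∑ l ∈ Finset.range (2 * k), l = k * (2 * k - 1) := by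
    rw [Finset.sum_range_id, mul_assoc, Nat.mul_div_cancel_left _ two_pos]
  have hodd : ¬ Even (2 * k - 1) := by
    have := NeZero.pos (2 * k)
    rw [Nat.not_even_iff_odd]
    exact ⟨k - 1, by omega⟩
  rw [hsum, mul_assoc 2, Nat.mul_div_cancel_left _ two_pos]
  refine neg_one_pow_congr ?_
  simp only [Nat.even_mul, hodd]
  tauto

lemma prod_range_pathTwist (hsign : (-1 : K) ^ m = 1) :
    ∏ l ∈ Finset.range m, pathTwist q 0 d (l * d) =
      (-1) ^ (m * d / 2) * ∏ l ∈ Finset.Icc 1 (m - 1), wcoef K m q (l * d) d := by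
  have hrange : Finset.range m = insert 0 (Finset.Icc 1 (m - 1)) := by
    have := NeZero.pos m
    grind
  simp only [pathTwist_zero_eq_wcoef, Finset.prod_mul_distrib, prod_range_neg_one_pow hsign]
  rw [hrange, Finset.prod_insert (by simp)]
  simp [wcoef]

lemma centralX_eq_sum_gam : centralX q d = ∑ i, gam K m q i (d * m) := by
  simp [centralX, vertexSum, pathMonomial_zero_right]

lemma centralY_eq_sum_del : centralY q d = ∑ i, del K m q i (d * m) := by
  simp [centralY, vertexSum, pathMonomial_zero_left]

lemma centralW_eq_sum_gam_mul_del : centralW q d =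
    ∑ i : ZMod m, ((-1 : K) ^ (i.val * d) * wcoef K m q i.val d) •
      (gam K m q i d * del K m q i d) := by
  simp only [centralW, vertexSum, pathTwist_zero_eq_wcoef, gam_mul_del q _ rfl]

end Coefficients

section Centre

/-- The shape `(s, t)` of the normally ordered path starting at `0` that occurs in `x^i y^j w^k`,
for the index `(i, j, k)`. -/
def exponentPair (d : ℕ) (p : ℕ × ℕ × Fin m) : ℕ × ℕ :=
  (p.1 * (d * m) + p.2.2 * d, p.2.1 * (d * m) + p.2.2 * d)

lemma exponentPair_injective {d : ℕ} (hd : 0 < d) :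
    Function.Injective (exponentPair (m := m) d) := by
  rintro ⟨i, j, k⟩ ⟨i', j', k'⟩ h
  simp only [exponentPair, mul_left_comm _ d, mul_comm _ d, ← mul_add, Prod.mk.injEq,
    Nat.mul_right_inj hd.ne'] at h
  obtain ⟨hi, hj⟩ := h
  have hk : k = k' := by
    ext
    simpa [Nat.mod_eq_of_lt] using congrArg (· % m) hi
  subst hk
  rw [Nat.add_right_cancel_iff, Nat.mul_left_inj (NeZero.ne m)] at hi hj
  rw [hi, hj]

lemma exists_exponentPair_eq {d s t : ℕ} (hdvd : d ∣ t) (hst : s ≡ t [MOD d * m]) :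
    ∃ p : ℕ × ℕ × Fin m, exponentPair d p = (s, t) := by
  obtain ⟨b, rfl⟩ := hdvd
  have hk : s % (d * m) = b % m * d := by rw [hst, Nat.mul_mod_mul_left, mul_comm]
  refine ⟨(s / (d * m), b / m, ⟨b % m, Nat.mod_lt _ (NeZero.pos m)⟩), Prod.ext ?_ ?_⟩
  · simp only [exponentPair]
    rw [← hk, mul_comm, Nat.div_add_mod]
  · simp only [exponentPair]
    conv_rhs => rw [← Nat.div_add_mod b m]
    ring

variable {q : ZMod m → K} {d : ℕ}

lemma originCoeff_reducedMonomial (hsign : (-1 : K) ^ m = 1) (hζ : (∏ i, q i) ^ d = 1)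
    (p : ℕ × ℕ × Fin m) :
    originCoeff q (reducedMonomial (centralX q d) (centralY q d) (centralW q d) p) =
      .single (exponentPair d p) (∏ l ∈ Finset.range p.2.2, pathTwist q 0 d (l * d)) :=
  originCoeff_centralX_pow_mul_centralY_pow_mul_centralW_pow hsign hζ _ _ _

lemma linearIndependent_reducedMonomial_central (hsign : (-1 : K) ^ m = 1)
    (hζ : (∏ i, q i) ^ d = 1) (hq : ∀ i, q i ≠ 0) (hd : 0 < d) :
    LinearIndependent K (reducedMonomial (centralX q d) (centralY q d) (centralW q d) :
      ℕ × ℕ × Fin m → ExtAlg K m q) := by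
  refine .of_comp (originCoeff q) ?_
  have hunit (p : ℕ × ℕ × Fin m) : ∏ l ∈ Finset.range p.2.2, pathTwist q 0 d (l * d) ≠ 0 :=
    Finset.prod_ne_zero_iff.mpr fun _ _ => pathTwist_ne_zero hq _ _ _
  have hsingle : LinearIndependent K fun p : ℕ × ℕ × Fin m =>
      Finsupp.single (exponentPair d p) (1 : K) :=
    (Finsupp.linearIndependent_single_one K (ℕ × ℕ)).comp _ (exponentPair_injective hd)
  convert hsingle.units_smul fun p => Units.mk0 _ (hunit p)
  ext1 p
  simp [originCoeff_reducedMonomial hsign hζ, Units.smul_def]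

lemma reducedMonomial_central_mem_center (hsign : (-1 : K) ^ m = 1) (hζ : (∏ i, q i) ^ d = 1)
    (p : ℕ × ℕ × Fin m) : reducedMonomial (centralX q d) (centralY q d) (centralW q d) p ∈
      Subalgebra.center K (ExtAlg K m q) :=
  mul_mem (mul_mem (pow_mem (centralX_mem_center hsign hζ) _)
    (pow_mem (centralY_mem_center hsign hζ) _)) (pow_mem (centralW_mem_center hsign hζ) _)

lemma span_reducedMonomial_central (hsign : (-1 : K) ^ m = 1)
    (hζ : IsPrimitiveRoot (∏ i, q i) d) (hq : ∀ i, q i ≠ 0) :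
    Submodule.span K (Set.range (reducedMonomial (centralX q d) (centralY q d) (centralW q d) :
      ℕ × ℕ × Fin m → ExtAlg K m q)) = (Subalgebra.center K (ExtAlg K m q)).toSubmodule := by
  set R : ℕ × ℕ × Fin m → ExtAlg K m q :=
    reducedMonomial (centralX q d) (centralY q d) (centralW q d) with hR
  have hle : Submodule.span K (Set.range R) ≤ (Subalgebra.center K (ExtAlg K m q)).toSubmodule :=
    Submodule.span_le.mpr <| Set.range_subset_iff.mpr
      (reducedMonomial_central_mem_center hsign hζ.pow_eq_one)
  have single_mem (p : ℕ × ℕ × Fin m) (c : K) : Finsupp.single (exponentPair d p) c ∈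
      (Submodule.span K (Set.range R)).map (originCoeff q) := by
    have hunit : ∏ l ∈ Finset.range p.2.2, pathTwist q 0 d (l * d) ≠ 0 :=
      Finset.prod_ne_zero_iff.mpr fun _ _ => pathTwist_ne_zero hq _ _ _
    refine ⟨(c / ∏ l ∈ Finset.range p.2.2, pathTwist q 0 d (l * d)) • R p,
      Submodule.smul_mem _ _ (Submodule.subset_span ⟨p, rfl⟩), ?_⟩
    rw [map_smul, hR, originCoeff_reducedMonomial hsign hζ.pow_eq_one, Finsupp.smul_single,
      smul_eq_mul, div_mul_cancel₀ _ hunit]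
  refine hle.antisymm fun z hz => ?_
  have hmap : originCoeff q z ∈ (Submodule.span K (Set.range R)).map (originCoeff q) := by
    rw [← Finsupp.sum_single (originCoeff q z)]
    refine Submodule.sum_mem _ fun ⟨s, t⟩ hr => ?_
    obtain ⟨hdvd, hst⟩ := dvd_and_modEq_of_originCoeff_ne_zero hsign hζ hq hz
      (Finsupp.mem_support_iff.mp hr)
    obtain ⟨p, hp⟩ := exists_exponentPair_eq hdvd hst
    exact hp ▸ single_mem p _
  obtain ⟨z', hz', heq⟩ := hmap
  rwa [← injOn_originCoeff_center (hle hz') hz heq]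

theorem exists_algEquiv_center (hsign : (-1 : K) ^ m = 1)
    (hζ : IsPrimitiveRoot (∏ i, q i) d) (hq : ∀ i, q i ≠ 0) (hd : 0 < d) :
    ∃ f : (MvPolynomial (Fin 3) K ⧸ Ideal.span {(.X 2 : MvPolynomial (Fin 3) K) ^ m -
        .C (∏ l ∈ Finset.range m, pathTwist q 0 d (l * d)) * (.X 0 * .X 1)}) ≃ₐ[K]
          Subalgebra.center K (ExtAlg K m q),
      (f (Ideal.Quotient.mk _ (.X 0)) : ExtAlg K m q) = centralX q d ∧
      (f (Ideal.Quotient.mk _ (.X 1)) : ExtAlg K m q) = centralY q d ∧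
      (f (Ideal.Quotient.mk _ (.X 2)) : ExtAlg K m q) = centralW q d := by
  let Z := Subalgebra.center K (ExtAlg K m q)
  let x : Z := ⟨centralX q d, centralX_mem_center hsign hζ.pow_eq_one⟩
  let y : Z := ⟨centralY q d, centralY_mem_center hsign hζ.pow_eq_one⟩
  let w : Z := ⟨centralW q d, centralW_mem_center hsign hζ.pow_eq_one⟩
  have hval : Z.val.toLinearMap ∘ (reducedMonomial x y w : ℕ × ℕ × Fin m → Z) =
      reducedMonomial (centralX q d) (centralY q d) (centralW q d) :=
    funext fun p => map_reducedMonomial Z.val x y w p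
  have hli : LinearIndependent K (reducedMonomial x y w : ℕ × ℕ × Fin m → Z) :=
    .of_comp Z.val.toLinearMap <|
      hval ▸ linearIndependent_reducedMonomial_central hsign hζ.pow_eq_one hq hd
  have hspan : Submodule.span K (Set.range (reducedMonomial x y w : ℕ × ℕ × Fin m → Z)) = ⊤ := by
    apply Submodule.map_injective_of_injective (f := Z.val.toLinearMap) Subtype.val_injective
    rw [Submodule.map_span, ← Set.range_comp, hval, span_reducedMonomial_central hsign hζ hq,
      Submodule.map_top]
    exact Submodule.range_subtype _ |>.symm
  obtain ⟨f, hX, hY, hW⟩ := exists_algEquiv_of_reducedMonomial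
    (Subtype.ext (centralW_pow hsign hζ.pow_eq_one) : w ^ m = _ • (x * y)) hli hspan
  exact ⟨f, congrArg Subtype.val hX, congrArg Subtype.val hY, congrArg Subtype.val hW⟩

end Centre

section GradedCentre

variable {q : ZMod m → K} {d : ℕ}

lemma homog_pathMonomial (i : ZMod m) (s t : ℕ) :
    Homog K m q (s + t) (pathMonomial q (i, s, t)) :=
  Submodule.subset_span ⟨i, _, s, t, rfl, rfl⟩

lemma homog_vertexSum (c : ZMod m → K) (s t : ℕ) : Homog K m q (s + t) (vertexSum q c s t) :=
  Submodule.sum_mem _ fun i _ => Submodule.smul_mem _ _ (homog_pathMonomial i s t)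

lemma add_eq_of_homog_of_repr_ne_zero {n : ℕ} {z : ExtAlg K m q} (hz : Homog K m q n z)
    {i : ZMod m} {s t : ℕ} (h : (pathBasis q).repr z (i, s, t) ≠ 0) : s + t = n := by
  contrapose! h
  induction hz using Submodule.span_induction with
  | mem z hz =>
    obtain ⟨j, k, s', t', hn, rfl⟩ := hz
    by_cases hjk : j + s' = k + t'
    · have hne : (j, s', t') ≠ (i, s, t) := by grind
      rw [gam_mul_del q j hjk, pathBasis_repr_pathMonomial, Finsupp.single_eq_of_ne hne.symm]
    · simp [gam_mul_del_of_ne q hjk]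
  | zero => simp
  | add z z' _ _ ih ih' => simp [ih, ih']
  | smul c z _ ih => simp [ih]

lemma neg_one_pow_eq_one_of_homog (hsign : (-1 : K) ^ m = 1) {n : ℕ} {z : ExtAlg K m q}
    (hz : z ≠ 0) (hhom : Homog K m q n z) (he : ∀ i, Commute (xe K m q i) z) :
    (-1 : K) ^ n = 1 := by
  obtain ⟨⟨i, s, t⟩, hne⟩ : ∃ p, (pathBasis q).repr z p ≠ 0 := by
    by_contra! hzero
    exact hz ((pathBasis q).repr.map_eq_zero_iff.mp (Finsupp.ext hzero))
  have hst : s ≡ t [MOD m] :=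
    (ZMod.natCast_eq_natCast_iff _ _ _).mp (cast_eq_cast_of_repr_ne_zero he hne)
  rw [← add_eq_of_homog_of_repr_ne_zero hhom hne, pow_add, pow_eq_pow_of_modEq hst hsign,
    ← pow_add, Even.neg_one_pow ⟨t, rfl⟩]

lemma ZGr_le_center (hsign : (-1 : K) ^ m = 1) :
    ZGr K m q ≤ Subalgebra.center K (ExtAlg K m q) := by
  refine Algebra.adjoin_le ?_
  rintro z ⟨n, hhom, hcomm⟩
  have he (i : ZMod m) : Commute (xe K m q i) z := by
    simpa [← xe_eq_pathMonomial, Commute, SemiconjBy, eq_comm] using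
      hcomm 0 _ (homog_pathMonomial i 0 0)
  rcases eq_or_ne z 0 with rfl | hz
  · exact zero_mem _
  have hn := neg_one_pow_eq_one_of_homog hsign hz hhom he
  have commute_of_homog {n' : ℕ} {g : ExtAlg K m q} (hg : Homog K m q n' g) : Commute g z := by
    have := hcomm n' g hg
    rw [pow_mul, hn, one_pow, one_smul] at this
    exact this.symm
  exact mem_center_of_commute he
    (fun i => commute_of_homog (xa_eq_pathMonomial q i ▸ homog_pathMonomial i 1 0))
    (fun i => commute_of_homog (xb_eq_pathMonomial q i ▸ homog_pathMonomial (i + 1) 0 1))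

lemma mem_ZGr_of_mem_center {n : ℕ} {z : ExtAlg K m q} (hhom : Homog K m q n z)
    (hn : (-1 : K) ^ n = 1) (hz : z ∈ Subalgebra.center K (ExtAlg K m q)) : z ∈ ZGr K m q :=
  Algebra.subset_adjoin ⟨n, hhom, fun n' g _ => by
    rw [pow_mul, hn, one_pow, one_smul, (commute_of_mem_center hz g).eq]⟩

lemma center_eq_ZGr (hsign : (-1 : K) ^ m = 1) (hζ : IsPrimitiveRoot (∏ i, q i) d)
    (hq : ∀ i, q i ≠ 0) : Subalgebra.center K (ExtAlg K m q) = ZGr K m q := by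
  refine le_antisymm ?_ (ZGr_le_center hsign)
  have hdm : (-1 : K) ^ (d * m) = 1 := by rw [mul_comm, pow_mul, hsign, one_pow]
  have hx : centralX q d ∈ ZGr K m q := mem_ZGr_of_mem_center (homog_vertexSum _ _ _) hdm
    (centralX_mem_center hsign hζ.pow_eq_one)
  have hy : centralY q d ∈ ZGr K m q := mem_ZGr_of_mem_center (homog_vertexSum _ _ _)
    (by rwa [zero_add]) (centralY_mem_center hsign hζ.pow_eq_one)
  have hw : centralW q d ∈ ZGr K m q := mem_ZGr_of_mem_center (homog_vertexSum _ _ _)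
    (Even.neg_one_pow ⟨d, rfl⟩) (centralW_mem_center hsign hζ.pow_eq_one)
  rw [← Subalgebra.toSubmodule.le_iff_le, ← span_reducedMonomial_central hsign hζ hq,
    Submodule.span_le]
  rintro _ ⟨p, rfl⟩
  exact (mul_mem (mul_mem (pow_mem hx _) (pow_mem hy _)) (pow_mem hw _) :
    _ ∈ ZGr K m q)

end GradedCentre

lemma neg_one_pow_eq_one_of_even_or_ringChar_eq_two {R : Type*} [Ring R] {n : ℕ}
    (h : Even n ∨ ringChar R = 2) : (-1 : R) ^ n = 1 := by
  rcases h with hn | hchar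
  · exact hn.neg_one_pow
  · have := ringChar.of_eq hchar
    rw [CharTwo.neg_eq, one_pow]

end ExtAlg

open MvPolynomial in
/-- if `ζ` is a primitive `d`-th root of unity and `m` is even or `char K = 2`,
then `K[X,Y,W]/⟨W^m - ε X Y⟩ → Z_gr(E(Λ_q))`, `X ↦ x`, `Y ↦ y`, `W ↦ w`,
is a `K`-algebra isomorphism. -/
theorem graded_centre_structure_m_even_or_char_two
    (K : Type) [Field K] (m : ℕ) [NeZero m] (hm : 1 ≤ m)
    (q : ZMod m → K) (hq : ∀ i, q i ≠ 0)
    (d : ℕ) (hd : 0 < d) (hζ : IsPrimitiveRoot (∏ i : ZMod m, q i) d)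
    (hcase : Even m ∨ ringChar K = 2) :
    let x : ExtAlg K m q := ∑ i : ZMod m, gam K m q i (d * m)
    let y : ExtAlg K m q := ∑ i : ZMod m, del K m q i (d * m)
    let w : ExtAlg K m q := ∑ i : ZMod m, ((-1 : K) ^ (i.val * d) * wcoef K m q i.val d) •
      (gam K m q i d * del K m q i d)
    let ε : K := (-1 : K) ^ (m * d / 2) *
      ∏ l ∈ Finset.Icc 1 (m - 1), ∏ k ∈ Finset.Icc 1 (l * d), (qblock K m q k d)⁻¹
    ∃ f : (MvPolynomial (Fin 3) K ⧸
        Ideal.span {(X 2 : MvPolynomial (Fin 3) K) ^ m - C ε * (X 0 * X 1)}) ≃ₐ[K]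
          ↥(ZGr K m q),
      (↑(f (Ideal.Quotient.mk _ (X 0))) : ExtAlg K m q) = x ∧
      (↑(f (Ideal.Quotient.mk _ (X 1))) : ExtAlg K m q) = y ∧
      (↑(f (Ideal.Quotient.mk _ (X 2))) : ExtAlg K m q) = w := by
  intro x y w ε
  have hsign : (-1 : K) ^ m = 1 := ExtAlg.neg_one_pow_eq_one_of_even_or_ringChar_eq_two hcase
  have hε : ∏ l ∈ Finset.range m, ExtAlg.pathTwist q 0 d (l * d) = ε :=
    ExtAlg.prod_range_pathTwist q d hsign
  obtain ⟨f, hX, hY, hW⟩ := ExtAlg.exists_algEquiv_center hsign hζ hq hd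
  rw [ExtAlg.centralX_eq_sum_gam] at hX
  rw [ExtAlg.centralY_eq_sum_del] at hY
  rw [ExtAlg.centralW_eq_sum_gam_mul_del] at hW
  rw [← hε]
  exact ⟨f.trans (Subalgebra.equivOfEq _ _ (ExtAlg.center_eq_ZGr hsign hζ hq)), hX, hY, hW⟩
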